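/- Let m_1,…,m_n ∈ ℕ^d, let s_1,…,s_n ∈ ℕ, set m = s_1m_1 + ⋯ + s_nm_n, and let ℓ be a positive integer with ℓ ≤ s_1 + ⋯ + s_n such that gcd(ℓ, m_j) = 1 for some component m_j of m. Then the tangent cone ideal of the extension satisfies (I_{S_{ℓ,m}})* = ι(I_S*) + ⟨F*⟩, where F* = x_{n+1}^ℓ if ℓ < s_1 + ⋯ + s_n, and F* = F = x_{n+1}^ℓ − x_1^{s_1}⋯x_n^{s_n} if ℓ = s_1 + ⋯ + s_n. -/

import Mathlib

open MvPolynomial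

/-- `f*`: the nonzero homogeneous component of `f` of smallest total degree. -/
noncomputable def lowestForm {K : Type*} [CommSemiring K] {σ : Type*}
    (f : MvPolynomial σ K) : MvPolynomial σ K :=
  homogeneousComponent (sInf {i : ℕ | homogeneousComponent i f ≠ 0}) f

/-- `I*`: the ideal of the tangent cone at the origin, generated by the
lowest-degree forms `f*` of the nonzero elements `f ∈ I`. -/
noncomputable def tangentConeIdeal {K : Type*} [CommSemiring K] {σ : Type*}
    (I : Ideal (MvPolynomial σ K)) : Ideal (MvPolynomial σ K) :=
  Ideal.span {g | ∃ f ∈ I, f ≠ 0 ∧ g = lowestForm f}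

/-!
Division by the polynomial `F = y ^ ℓ - P`, monic in `y`, writes every `f` as
`q * F + ∑_{b < ℓ} r_b * y ^ b` with `r_b` free of `y`. When `P` has order at least `ℓ`, the step
`y ^ ℓ = F + P` never lowers the order, so if `f` has order `e`, then `q` has order at least
`e - ℓ` and `r_b` has order at least `e - b`. In degree `e` this identity exhibits `f*` as a
combination of `F*` and the components of degree `e - b` of the `r_b`, which lie in `I*` as soon as
the `r_b` lie in `I`. For an extension semigroup, `r_b ∈ I_S` because `ℓ` is coprime to `m_j`: the
exponents of `t_j` occurring in the images of the `r_b * y ^ b` lie in distinct classes modulo `ℓ`.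
-/

section Order

variable {R σ τ : Type*} [CommSemiring R]

lemma mem_pow_idealOfVars_iff_homogeneousComponent {e : ℕ} {f : MvPolynomial σ R} :
    f ∈ idealOfVars σ R ^ e ↔ ∀ i < e, homogeneousComponent i f = 0 := by
  rw [mem_pow_idealOfVars_iff']
  refine ⟨fun hf i hi ↦ ?_, fun hf u hu ↦ ?_⟩
  · ext u
    rw [coeff_homogeneousComponent, coeff_zero]
    split_ifs with hui
    · exact hf u (hui ▸ hi)
    · rfl
  · simpa [coeff_homogeneousComponent] using congrArg (coeff u) (hf _ hu)

lemma rename_mem_pow_idealOfVars (κ : σ → τ) {e : ℕ} {f : MvPolynomial σ R}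
    (hf : f ∈ idealOfVars σ R ^ e) : rename κ f ∈ idealOfVars τ R ^ e := by
  rw [mem_pow_idealOfVars_iff_homogeneousComponent] at hf ⊢
  intro i hi
  rw [← rename_homogeneousComponent, hf i hi, map_zero]

lemma X_pow_mem_pow_idealOfVars (y : τ) (k : ℕ) :
    (X y : MvPolynomial τ R) ^ k ∈ idealOfVars τ R ^ k :=
  Ideal.pow_mem_pow (Ideal.subset_span (Set.mem_range_self y)) k

lemma rename_mul_X_pow_mem_pow_idealOfVars {κ : σ → τ} {y : τ} {a k : ℕ}
    {g : MvPolynomial σ R} (hg : g ∈ idealOfVars σ R ^ a) :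
    rename κ g * X y ^ k ∈ idealOfVars τ R ^ (a + k) :=
  pow_add (idealOfVars τ R) a k ▸ Ideal.mul_mem_mul (rename_mem_pow_idealOfVars κ hg)
    (X_pow_mem_pow_idealOfVars y k)

lemma exists_eq_mapDomain_add_single {κ : σ → τ} {y : τ} (hκ : ∀ t, t = y ∨ t ∈ Set.range κ)
    (u : τ →₀ ℕ) :
    ∃ (v : σ →₀ ℕ) (k : ℕ), u = v.mapDomain κ + Finsupp.single y k := by
  induction u using Finsupp.induction_linear with
  | zero => exact ⟨0, 0, by simp⟩
  | add u₁ u₂ h₁ h₂ =>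
    obtain ⟨v₁, k₁, rfl⟩ := h₁
    obtain ⟨v₂, k₂, rfl⟩ := h₂
    exact ⟨v₁ + v₂, k₁ + k₂, by rw [Finsupp.mapDomain_add, Finsupp.single_add]; abel⟩
  | single t a =>
    obtain rfl | ⟨i, rfl⟩ := hκ t
    · exact ⟨0, a, by simp⟩
    · exact ⟨Finsupp.single i a, 0, by simp⟩

lemma exists_monomial_eq_rename_mul_X_pow {κ : σ → τ} {y : τ}
    (hκ : ∀ t, t = y ∨ t ∈ Set.range κ) {e : ℕ}
    {u : τ →₀ ℕ} (hu : e ≤ u.degree) (c : R) :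
    ∃ k, ∃ g ∈ idealOfVars σ R ^ (e - k), monomial u c = rename κ g * X y ^ k := by
  obtain ⟨v, k, rfl⟩ := exists_eq_mapDomain_add_single hκ u
  refine ⟨k, monomial v c, (mem_pow_idealOfVars_iff _ _).mpr fun w hw ↦ ?_, ?_⟩
  · rw [map_add, Finsupp.degree_mapDomain, Finsupp.degree_single] at hu
    rw [Finset.mem_singleton.mp (support_monomial_subset hw)]
    lia
  · rw [rename_monomial, X_pow_eq_monomial, monomial_mul, mul_one]

lemma homogeneousComponent_add_mul {a b : ℕ} {p q : MvPolynomial σ R}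
    (hp : p ∈ idealOfVars σ R ^ a) (hq : q ∈ idealOfVars σ R ^ b) :
    homogeneousComponent (a + b) (p * q) =
      homogeneousComponent a p * homogeneousComponent b q := by
  classical
  rw [mem_pow_idealOfVars_iff'] at hp hq
  ext u
  by_cases hu : u.degree = a + b
  · rw [coeff_homogeneousComponent, if_pos hu, coeff_mul, coeff_mul]
    refine Finset.sum_congr rfl fun ⟨v, w⟩ hvw ↦ ?_
    have hdeg : v.degree + w.degree = a + b := by
      rw [← map_add, Finset.HasAntidiagonal.mem_antidiagonal.mp hvw, hu]
    simp only [coeff_homogeneousComponent]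
    rcases lt_trichotomy v.degree a with hv | hv | hv
    · simp [hp v hv, hv.ne]
    · rw [if_pos hv, if_pos (by lia)]
    · simp [hq w (by lia), hv.ne']
  · rw [coeff_homogeneousComponent, if_neg hu]
    exact (((homogeneousComponent_isHomogeneous a p).mul
      (homogeneousComponent_isHomogeneous b q)).coeff_eq_zero hu).symm

lemma homogeneousComponent_mul_of_mem_pow_idealOfVars {e k : ℕ} {p q : MvPolynomial σ R}
    (hp : p ∈ idealOfVars σ R ^ (e - k)) (hq : q ∈ idealOfVars σ R ^ k) :
    homogeneousComponent e (p * q) =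
      if k ≤ e then homogeneousComponent (e - k) p * homogeneousComponent k q else 0 := by
  split_ifs with hke
  · simpa [hke] using homogeneousComponent_add_mul hp hq
  · exact mem_pow_idealOfVars_iff_homogeneousComponent.mp (Ideal.mul_mem_left _ p hq) e
      (not_le.mp hke)

end Order

section TangentCone

variable {R σ τ : Type*} [CommSemiring R]

lemma exists_lowestForm_eq (f : MvPolynomial σ R) :
    ∃ e, f ∈ idealOfVars σ R ^ e ∧ lowestForm f = homogeneousComponent e f :=
  ⟨_, mem_pow_idealOfVars_iff_homogeneousComponent.mpr fun _ hi ↦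
    not_not.mp (Nat.notMem_of_lt_sInf hi), rfl⟩

lemma lowestForm_eq_of_mem_pow_idealOfVars {f : MvPolynomial σ R} {e : ℕ}
    (hf : f ∈ idealOfVars σ R ^ e) (hne : homogeneousComponent e f ≠ 0) :
    lowestForm f = homogeneousComponent e f := by
  have horder : IsLeast {i | homogeneousComponent i f ≠ 0} e :=
    ⟨hne, fun i hi ↦ not_lt.mp fun hlt ↦
      hi (mem_pow_idealOfVars_iff_homogeneousComponent.mp hf i hlt)⟩
  rw [lowestForm, horder.csInf_eq]

lemma homogeneousComponent_mem_tangentConeIdeal {I : Ideal (MvPolynomial σ R)}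
    {f : MvPolynomial σ R} {e : ℕ} (hfI : f ∈ I) (hf : f ∈ idealOfVars σ R ^ e) :
    homogeneousComponent e f ∈ tangentConeIdeal I := by
  by_cases hne : homogeneousComponent e f = 0
  · exact hne ▸ zero_mem _
  · refine Ideal.subset_span ⟨f, hfI, ?_, (lowestForm_eq_of_mem_pow_idealOfVars hf hne).symm⟩
    rintro rfl
    exact hne (map_zero _)

lemma tangentConeIdeal_le_iff {I J : Ideal (MvPolynomial σ R)} :
    tangentConeIdeal I ≤ J ↔
      ∀ f ∈ I, ∀ e, f ∈ idealOfVars σ R ^ e → homogeneousComponent e f ∈ J := by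
  refine ⟨fun h f hfI e hf ↦ h (homogeneousComponent_mem_tangentConeIdeal hfI hf), fun h ↦ ?_⟩
  refine Ideal.span_le.mpr ?_
  rintro _ ⟨f, hfI, -, rfl⟩
  obtain ⟨e, hf, hfe⟩ := exists_lowestForm_eq f
  exact hfe ▸ h f hfI e hf

lemma map_rename_tangentConeIdeal_le (κ : σ → τ) {I : Ideal (MvPolynomial σ R)}
    {J : Ideal (MvPolynomial τ R)} (hIJ : I.map (rename κ) ≤ J) :
    (tangentConeIdeal I).map (rename κ) ≤ tangentConeIdeal J := by
  rw [Ideal.map_le_iff_le_comap, tangentConeIdeal_le_iff]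
  intro f hfI e hf
  rw [Ideal.mem_comap, rename_homogeneousComponent]
  exact homogeneousComponent_mem_tangentConeIdeal (hIJ (Ideal.mem_map_of_mem _ hfI))
    (rename_mem_pow_idealOfVars κ hf)

lemma homogeneousComponent_rename_mul_X_pow_mem {I : Ideal (MvPolynomial σ R)} {κ : σ → τ}
    {y : τ} {e b : ℕ} {g : MvPolynomial σ R} (hgI : g ∈ I) (hg : g ∈ idealOfVars σ R ^ (e - b)) :
    homogeneousComponent e (rename κ g * X y ^ b) ∈ (tangentConeIdeal I).map (rename κ) := by
  rw [homogeneousComponent_mul_of_mem_pow_idealOfVars (rename_mem_pow_idealOfVars κ hg)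
    (X_pow_mem_pow_idealOfVars y b)]
  split_ifs
  · rw [← rename_homogeneousComponent]
    exact Ideal.mul_mem_right _ _ (Ideal.mem_map_of_mem _
      (homogeneousComponent_mem_tangentConeIdeal hgI hg))
  · exact zero_mem _

end TangentCone

section Division

variable {R σ τ : Type*} [CommRing R] {κ : σ → τ} {y : τ} {ℓ : ℕ} {P : MvPolynomial σ R}

/-- Division of `f` by `X y ^ ℓ - rename κ P`, a polynomial monic in `y` whose other coefficients
are free of `y`, with all summands of order at least `e`, the order being measured by the powers of
`idealOfVars`. The remainder is recorded by its coefficients `r b` with respect to the powers of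
`y`. The subtractions truncate, so nothing is required of `q` if `e ≤ ℓ` or of `r b` if `e ≤ b`. -/
def HasFilteredDivision (κ : σ → τ) (y : τ) (ℓ : ℕ) (P : MvPolynomial σ R) (e : ℕ)
    (f : MvPolynomial τ R) : Prop :=
  ∃ q ∈ idealOfVars τ R ^ (e - ℓ), ∃ r : Fin ℓ → MvPolynomial σ R,
    (∀ b : Fin ℓ, r b ∈ idealOfVars σ R ^ (e - b)) ∧
    f = q * (X y ^ ℓ - rename κ P) + ∑ b : Fin ℓ, rename κ (r b) * X y ^ (b : ℕ)

lemma HasFilteredDivision.zero (e : ℕ) : HasFilteredDivision κ y ℓ P e 0 :=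
  ⟨0, zero_mem _, 0, fun _ ↦ zero_mem _, by simp⟩

lemma HasFilteredDivision.add {e : ℕ} {f₁ f₂ : MvPolynomial τ R}
    (h₁ : HasFilteredDivision κ y ℓ P e f₁) (h₂ : HasFilteredDivision κ y ℓ P e f₂) :
    HasFilteredDivision κ y ℓ P e (f₁ + f₂) := by
  obtain ⟨q₁, hq₁, r₁, hr₁, rfl⟩ := h₁
  obtain ⟨q₂, hq₂, r₂, hr₂, rfl⟩ := h₂
  refine ⟨q₁ + q₂, add_mem hq₁ hq₂, r₁ + r₂, fun b ↦ add_mem (hr₁ b) (hr₂ b), ?_⟩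
  simp only [Pi.add_apply, map_add, add_mul, Finset.sum_add_distrib]
  abel

lemma HasFilteredDivision.mul_divisor {e : ℕ} {q : MvPolynomial τ R}
    (hq : q ∈ idealOfVars τ R ^ (e - ℓ)) :
    HasFilteredDivision κ y ℓ P e (q * (X y ^ ℓ - rename κ P)) :=
  ⟨q, hq, 0, fun _ ↦ zero_mem _, by simp⟩

lemma HasFilteredDivision.rename_mul_X_pow_of_lt {e k : ℕ} (hk : k < ℓ) {g : MvPolynomial σ R}
    (hg : g ∈ idealOfVars σ R ^ (e - k)) :
    HasFilteredDivision κ y ℓ P e (rename κ g * X y ^ k) := by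
  classical
  refine ⟨0, zero_mem _, Pi.single ⟨k, hk⟩ g, fun b ↦ ?_, ?_⟩
  · obtain rfl | hb := eq_or_ne b ⟨k, hk⟩
    · simpa using hg
    · simp [hb]
  · rw [Finset.sum_eq_single ⟨k, hk⟩ (fun b _ hb ↦ by simp [hb]) (by simp)]
    simp

lemma hasFilteredDivision_rename_mul_X_pow (hℓ : 0 < ℓ) (hP : P ∈ idealOfVars σ R ^ ℓ) {e k : ℕ}
    {g : MvPolynomial σ R} (hg : g ∈ idealOfVars σ R ^ (e - k)) :
    HasFilteredDivision κ y ℓ P e (rename κ g * X y ^ k) := by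
  induction k using Nat.strong_induction_on generalizing g with
  | _ k ih =>
  obtain hk | hk := lt_or_ge k ℓ
  · exact .rename_mul_X_pow_of_lt hk hg
  · have hgP : g * P ∈ idealOfVars σ R ^ (e - (k - ℓ)) :=
      Ideal.pow_le_pow_right (by lia) (pow_add (idealOfVars σ R) (e - k) ℓ ▸
        Ideal.mul_mem_mul hg hP)
    have hq : rename κ g * X y ^ (k - ℓ) ∈ idealOfVars τ R ^ (e - ℓ) :=
      Ideal.pow_le_pow_right (by lia) (rename_mul_X_pow_mem_pow_idealOfVars hg)
    have hstep : rename κ g * X y ^ k = rename κ g * X y ^ (k - ℓ) * (X y ^ ℓ - rename κ P)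
        + rename κ (g * P) * X y ^ (k - ℓ) := by
      rw [map_mul, ← pow_sub_mul_pow (X y) hk]
      ring
    exact hstep ▸ (HasFilteredDivision.mul_divisor hq).add (ih (k - ℓ) (by lia) hgP)

lemma hasFilteredDivision_of_mem_pow_idealOfVars (hκ : ∀ t, t = y ∨ t ∈ Set.range κ)
    (hℓ : 0 < ℓ) (hP : P ∈ idealOfVars σ R ^ ℓ) {e : ℕ} {f : MvPolynomial τ R}
    (hf : f ∈ idealOfVars τ R ^ e) : HasFilteredDivision κ y ℓ P e f := by
  rw [f.as_sum]
  refine Finset.sum_induction _ _ (fun _ _ ↦ .add) (.zero e) fun u hu ↦ ?_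
  obtain ⟨k, g, hg, hmon⟩ := exists_monomial_eq_rename_mul_X_pow hκ
    ((mem_pow_idealOfVars_iff e f).mp hf u hu) (coeff u f)
  exact hmon ▸ hasFilteredDivision_rename_mul_X_pow hℓ hP hg

end Division

section Extension

variable {R σ τ : Type*} [CommRing R] {κ : σ → τ} {y : τ} {ℓ : ℕ} {P : MvPolynomial σ R}
  {I : Ideal (MvPolynomial σ R)} {J : Ideal (MvPolynomial τ R)}

lemma X_pow_sub_rename_mem_pow_idealOfVars (κ : σ → τ) (y : τ) (hP : P ∈ idealOfVars σ R ^ ℓ) :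
    X y ^ ℓ - rename κ P ∈ idealOfVars τ R ^ ℓ :=
  sub_mem (X_pow_mem_pow_idealOfVars y ℓ) (rename_mem_pow_idealOfVars κ hP)

lemma homogeneousComponent_X_pow_sub_rename (κ : σ → τ) (y : τ) (ℓ : ℕ) (P : MvPolynomial σ R) :
    homogeneousComponent ℓ (X y ^ ℓ - rename κ P) =
      X y ^ ℓ - rename κ (homogeneousComponent ℓ P) := by
  rw [map_sub, homogeneousComponent_eq_self (isHomogeneous_X_pow y ℓ),
    rename_homogeneousComponent]

/- `hrem` says that `1, y, …, y ^ (ℓ - 1)` are linearly independent over `R[σ] / I` in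
`R[τ] / J`. -/
theorem tangentConeIdeal_eq_map_rename_sup_span (hκ : ∀ t, t = y ∨ t ∈ Set.range κ)
    (hℓ : 0 < ℓ) (hP : P ∈ idealOfVars σ R ^ ℓ) (hIJ : I.map (rename κ) ≤ J)
    (hFJ : X y ^ ℓ - rename κ P ∈ J)
    (hrem : ∀ r : Fin ℓ → MvPolynomial σ R,
      ∑ b : Fin ℓ, rename κ (r b) * X y ^ (b : ℕ) ∈ J → ∀ b, r b ∈ I) :
    tangentConeIdeal J = (tangentConeIdeal I).map (rename κ) ⊔
      Ideal.span {X y ^ ℓ - rename κ (homogeneousComponent ℓ P)} := by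
  have hF := X_pow_sub_rename_mem_pow_idealOfVars κ y hP
  rw [← homogeneousComponent_X_pow_sub_rename]
  refine le_antisymm (tangentConeIdeal_le_iff.mpr fun f hfJ e hf ↦ ?_)
    (sup_le (map_rename_tangentConeIdeal_le κ hIJ) ((Ideal.span_singleton_le_iff_mem _).mpr
      (homogeneousComponent_mem_tangentConeIdeal hFJ hF)))
  obtain ⟨q, hq, r, hr, hdiv⟩ := hasFilteredDivision_of_mem_pow_idealOfVars hκ hℓ hP hf
  have hrI : ∀ b, r b ∈ I := hrem r <| by
    rw [← sub_eq_of_eq_add' hdiv]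
    exact sub_mem hfJ (Ideal.mul_mem_left _ q hFJ)
  rw [hdiv, map_add, map_sum, add_comm]
  refine Submodule.add_mem_sup (sum_mem fun b _ ↦
    homogeneousComponent_rename_mul_X_pow_mem (hrI b) (hr b)) ?_
  rw [homogeneousComponent_mul_of_mem_pow_idealOfVars hq hF]
  split_ifs
  · exact Ideal.mul_mem_left _ _ (Ideal.mem_span_singleton_self _)
  · exact zero_mem _

end Extension

section Toric

variable {ℓ : ℕ} {υ : Type*} {μ : υ →₀ ℕ} {j : υ}

section Independence

variable {R : Type*} [CommSemiring R]

lemma coeff_expand_mul_monomial_pow_of_ne (hμ : ℓ.Coprime (μ j)) {b b' : Fin ℓ} (hb : b' ≠ b)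
    (v : υ →₀ ℕ) (p : MvPolynomial υ R) :
    coeff (ℓ • v + (b : ℕ) • μ) (expand ℓ p * monomial μ 1 ^ (b' : ℕ)) = 0 := by
  classical
  rw [monomial_pow, one_pow, coeff_mul_monomial', mul_one]
  split_ifs with hle
  · refine coeff_expand_of_not_dvd p (i := j) fun hdvd ↦ hb ?_
    have hlej := hle j
    simp only [Finsupp.coe_tsub, Finsupp.coe_add, Finsupp.coe_smul, Pi.sub_apply, Pi.add_apply,
      Pi.smul_apply, smul_eq_mul] at hdvd hlej
    have hmod : (b' : ℕ) * μ j ≡ b * μ j [MOD ℓ] := by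
      simpa [Nat.ModEq] using (Nat.modEq_iff_dvd' hlej).mpr hdvd
    exact Fin.ext ((hmod.cancel_right_of_coprime hμ).eq_of_lt_of_lt b'.isLt b.isLt)
  · rfl

lemma eq_zero_of_sum_expand_mul_monomial_pow_eq_zero (hμ : ℓ.Coprime (μ j))
    {g : Fin ℓ → MvPolynomial υ R}
    (hg : ∑ b : Fin ℓ, expand ℓ (g b) * monomial μ 1 ^ (b : ℕ) = 0) (b : Fin ℓ) : g b = 0 := by
  ext v
  calc coeff v (g b)
      = coeff (ℓ • v + (b : ℕ) • μ) (expand ℓ (g b) * monomial μ 1 ^ (b : ℕ)) := by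
        rw [monomial_pow, one_pow, coeff_mul_monomial, mul_one, coeff_expand_smul ℓ b.pos.ne']
    _ = coeff (ℓ • v + (b : ℕ) • μ) (∑ b : Fin ℓ, expand ℓ (g b) * monomial μ 1 ^ (b : ℕ)) := by
        rw [coeff_sum]
        exact (Finset.sum_eq_single b (fun b' _ hb' ↦
          coeff_expand_mul_monomial_pow_of_ne hμ hb' v (g b')) (by simp)).symm
    _ = coeff v 0 := by rw [hg, coeff_zero, coeff_zero]

end Independence

theorem tangentConeIdeal_ker_eq_map_rename_sup_span {R σ τ : Type*} [CommRing R] {κ : σ → τ}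
    {y : τ} {P : MvPolynomial σ R} (hκ : ∀ t, t = y ∨ t ∈ Set.range κ) (hℓ : 0 < ℓ)
    (hP : P ∈ idealOfVars σ R ^ ℓ) (hμ : ℓ.Coprime (μ j))
    {φ : MvPolynomial σ R →ₐ[R] MvPolynomial υ R} {ψ : MvPolynomial τ R →ₐ[R] MvPolynomial υ R}
    (hψκ : ψ.comp (rename κ) = (expand ℓ).comp φ) (hψy : ψ (X y) = monomial μ 1)
    (hφP : φ P = monomial μ 1) :
    tangentConeIdeal (RingHom.ker ψ) = (tangentConeIdeal (RingHom.ker φ)).map (rename κ) ⊔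
      Ideal.span {X y ^ ℓ - rename κ (homogeneousComponent ℓ P)} := by
  have hψ_rename (p : MvPolynomial σ R) : ψ (rename κ p) = expand ℓ (φ p) :=
    DFunLike.congr_fun hψκ p
  refine tangentConeIdeal_eq_map_rename_sup_span hκ hℓ hP ?_ ?_ fun r hr ↦ ?_
  · refine Ideal.map_le_iff_le_comap.mpr fun p hp ↦ ?_
    rw [Ideal.mem_comap, RingHom.mem_ker, hψ_rename, RingHom.mem_ker.mp hp, map_zero]
  · rw [RingHom.mem_ker, map_sub, map_pow, hψy, hψ_rename, hφP, expand_monomial, monomial_pow,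
      one_pow, sub_self]
  · rw [RingHom.mem_ker, map_sum] at hr
    simp only [map_mul, map_pow, hψy, hψ_rename] at hr
    exact eq_zero_of_sum_expand_mul_monomial_pow_eq_zero hμ hr

end Toric

section Monomials

lemma prod_prod_pow_pow {ι κ M : Type*} [Fintype ι] [Fintype κ] [CommMonoid M] (x : κ → M)
    (m : ι → κ → ℕ) (s : ι → ℕ) :
    ∏ i, (∏ j, x j ^ m i j) ^ s i = ∏ j, x j ^ ∑ i, s i * m i j := by
  simp_rw [← Finset.prod_pow, ← pow_mul, mul_comm (m _ _)]
  rw [Finset.prod_comm]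
  simp_rw [Finset.prod_pow_eq_pow_sum]

variable {R σ : Type*} [CommSemiring R] [Fintype σ]

lemma prod_univ_X_pow (v : σ → ℕ) :
    ∏ j, (X j : MvPolynomial σ R) ^ v j = monomial (Finsupp.equivFunOnFinite.symm v) 1 := by
  rw [monomial_eq, Finsupp.prod_fintype _ _ (by simp)]
  simp

lemma isHomogeneous_prod_univ_X_pow (s : σ → ℕ) :
    (∏ i, (X i : MvPolynomial σ R) ^ s i).IsHomogeneous (∑ i, s i) :=
  .prod _ _ _ fun i _ ↦ isHomogeneous_X_pow i (s i)

lemma prod_univ_X_pow_mem_pow_idealOfVars {e : ℕ} {s : σ → ℕ} (hs : e ≤ ∑ i, s i) :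
    ∏ i, (X i : MvPolynomial σ R) ^ s i ∈ idealOfVars σ R ^ e := by
  rw [mem_pow_idealOfVars_iff_homogeneousComponent]
  intro i hi
  rw [homogeneousComponent_of_mem (isHomogeneous_prod_univ_X_pow s), if_neg (by lia)]

end Monomials

theorem stmt_7_general (K : Type*) [CommRing K] (d n : ℕ)
    (m : Fin n → Fin d → ℕ) (s : Fin n → ℕ) (ℓ : ℕ) (hℓ : 0 < ℓ)
    (hδ : ℓ ≤ ∑ i, s i)
    (hgcd : ∃ j : Fin d, Nat.gcd ℓ (∑ i, s i * m i j) = 1)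
    (φ : MvPolynomial (Fin n) K →ₐ[K] MvPolynomial (Fin d) K)
    (hφ : φ = aeval fun i : Fin n => ∏ j : Fin d, X j ^ m i j)
    (ψ : MvPolynomial (Fin (n + 1)) K →ₐ[K] MvPolynomial (Fin d) K)
    (hψ : ψ = aeval fun i : Fin (n + 1) =>
      Fin.lastCases (∏ j : Fin d, X j ^ (∑ i', s i' * m i' j))
        (fun i' : Fin n => ∏ j : Fin d, X j ^ (ℓ * m i' j)) i)
    (F Fstar : MvPolynomial (Fin (n + 1)) K)
    (hF : F = X (Fin.last n) ^ ℓ - ∏ i : Fin n, X i.castSucc ^ s i)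
    (hFstar : Fstar = if ℓ < ∑ i, s i then X (Fin.last n) ^ ℓ else F) :
    tangentConeIdeal (RingHom.ker ψ) =
      Ideal.map (rename (Fin.castSucc : Fin n → Fin (n + 1)))
          (tangentConeIdeal (RingHom.ker φ)) ⊔
        Ideal.span {Fstar} := by
  obtain ⟨j, hj⟩ := hgcd
  set P : MvPolynomial (Fin n) K := ∏ i, X i ^ s i with hP
  have hψκ : ψ.comp (rename Fin.castSucc) = (expand ℓ).comp φ := by
    ext1 i
    simp [hφ, hψ, pow_mul]
  have hψy : ψ (X (Fin.last n)) =
      monomial (Finsupp.equivFunOnFinite.symm fun j ↦ ∑ i, s i * m i j) 1 := by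
    simp [hψ, prod_univ_X_pow]
  have hφP : φ P = monomial (Finsupp.equivFunOnFinite.symm fun j ↦ ∑ i, s i * m i j) 1 := by
    simp only [hφ, hP, map_prod, map_pow, aeval_X, prod_prod_pow_pow]
    rw [prod_univ_X_pow]
  have hFP : Fstar = X (Fin.last n) ^ ℓ - rename Fin.castSucc (homogeneousComponent ℓ P) := by
    rw [homogeneousComponent_of_mem (isHomogeneous_prod_univ_X_pow s), hFstar, hF]
    split_ifs <;> first | lia | simp
  rw [hFP]
  exact tangentConeIdeal_ker_eq_map_rename_sup_span
    (fun t ↦ t.eq_castSucc_or_eq_last.symm.imp_right fun ⟨i, hi⟩ ↦ ⟨i, hi.symm⟩) hℓ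
    (prod_univ_X_pow_mem_pow_idealOfVars hδ) (j := j) hj hψκ hψy hφP

/-- For `ℓ ≤ s_1 + ⋯ + s_n` positive and coprime to some
component of `m = s_1 m_1 + ⋯ + s_n m_n`, the tangent cone ideal of the
extension satisfies `(I_{S_{ℓ,m}})* = ι(I_S*) + ⟨F*⟩`, where
`F* = x_{n+1}^ℓ` if `ℓ < s_1 + ⋯ + s_n` and `F* = F = x_{n+1}^ℓ − x_1^{s_1}⋯x_n^{s_n}`
if `ℓ = s_1 + ⋯ + s_n`. -/
theorem stmt_7 (K : Type*) [Field K] (d n : ℕ)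
    (m : Fin n → Fin d → ℕ) (s : Fin n → ℕ) (ℓ : ℕ) (hℓ : 0 < ℓ)
    (hδ : ℓ ≤ ∑ i, s i)
    (hgcd : ∃ j : Fin d, Nat.gcd ℓ (∑ i, s i * m i j) = 1)
    (φ : MvPolynomial (Fin n) K →ₐ[K] MvPolynomial (Fin d) K)
    (hφ : φ = aeval fun i : Fin n => ∏ j : Fin d, X j ^ m i j)
    (ψ : MvPolynomial (Fin (n + 1)) K →ₐ[K] MvPolynomial (Fin d) K)
    (hψ : ψ = aeval fun i : Fin (n + 1) =>
      Fin.lastCases (∏ j : Fin d, X j ^ (∑ i', s i' * m i' j))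
        (fun i' : Fin n => ∏ j : Fin d, X j ^ (ℓ * m i' j)) i)
    (F Fstar : MvPolynomial (Fin (n + 1)) K)
    (hF : F = X (Fin.last n) ^ ℓ - ∏ i : Fin n, X i.castSucc ^ s i)
    (hFstar : Fstar = if ℓ < ∑ i, s i then X (Fin.last n) ^ ℓ else F) :
    tangentConeIdeal (RingHom.ker ψ) =
      Ideal.map (rename (Fin.castSucc : Fin n → Fin (n + 1)))
          (tangentConeIdeal (RingHom.ker φ)) ⊔
        Ideal.span {Fstar} :=
  stmt_7_general K d n m s ℓ hℓ hδ hgcd φ hφ ψ hψ F Fstar hF hFstar
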